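/- arXiv:1311.4197 — 8 statements merged into one kernel-verified Lean document; each statement's English description precedes it below -/
import Mathlib

section
/- Let A be a 2-cocycle on a Lie algebra g over a field K and let ν ∈ Ker A. Define the bilinear form A^ν(ξ,η) := A([ν,ξ],η). Then A^ν is symmetric, i.e. A^ν(ξ,η) = A^ν(η,ξ) for all ξ,η ∈ g, and A^ν vanishes whenever one of its arguments lies in Ker A: if ξ ∈ Ker A then A^ν(ξ,η) = A^ν(η,ξ) = 0 for all η ∈ g (so A^ν descends to a well-defined symmetric form on g / Ker A). -/
/-- For a 2-cocycle `A` on a Lie algebra `g` and `ν ∈ Ker A`, the bilinear form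
`A^ν(ξ,η) := A([ν,ξ],η)` is symmetric, and it vanishes whenever one of its arguments
lies in `Ker A` (so it descends to a well-defined symmetric form on `g / Ker A`). -/
theorem two_cocycle_Anu_symm_and_descends
    {K : Type*} [Field K] {g : Type*} [LieRing g] [LieAlgebra K g]
    (A : g →ₗ[K] g →ₗ[K] K) (hAlt : ∀ ξ : g, A ξ ξ = 0)
    (hCocycle : ∀ ξ η ζ : g, A ⁅ξ, η⁆ ζ + A ⁅η, ζ⁆ ξ + A ⁅ζ, ξ⁆ η = 0)
    (ν : g) (hν : ∀ η : g, A ν η = 0) :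
    (∀ ξ η : g, A ⁅ν, ξ⁆ η = A ⁅ν, η⁆ ξ) ∧
    (∀ ξ : g, (∀ η', A ξ η' = 0) → ∀ η : g, A ⁅ν, ξ⁆ η = 0 ∧ A ⁅ν, η⁆ ξ = 0) := by
  -- An alternating form is skew, so the left kernel is also a right kernel.
  have right_ker : ∀ x : g, (∀ y, A x y = 0) → ∀ y, A y x = 0 := fun x hx y => by
    have h := hAlt (x + y)
    simpa [hAlt, hx] using h
  have symm : ∀ ξ η : g, A ⁅ν, ξ⁆ η = A ⁅ν, η⁆ ξ := fun ξ η => by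
    -- The middle term of the cocycle identity for `(ν, ξ, η)` vanishes as `ν ∈ Ker A`.
    have h := hCocycle ν ξ η
    rw [right_ker ν hν, ← lie_skew η ν, map_neg, LinearMap.neg_apply] at h
    linear_combination h
  refine ⟨symm, fun ξ hξ η => ?_⟩
  have h := right_ker ξ hξ ⁅ν, η⁆
  exact ⟨(symm ξ η).trans h, h⟩
end

section
/- Let g be a finite-dimensional real Lie algebra whose Killing form κ is negative definite, let a ∈ g, and define A(ξ,η) := κ(a,[ξ,η]). Then: (1) A is a 2-cocycle on g; (2) Ker A equals the centralizer of a, i.e. Ker A = {ξ ∈ g : [a,ξ] = 0}; (3) a lies in the center of the Lie subalgebra Ker A; and (4) for every ξ ∉ Ker A one has A^a(ξ,ξ) = −κ([a,ξ],[a,ξ]) > 0, where A^a(ξ,η) = A([a,ξ],η). In particular the linear pencil determined by (g, A) is compact, witnessed by ν = a. -/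
/-! By invariance of the Killing form, `A ξ η = κ([a,ξ], η)`. The Jacobi identity gives the cocycle
condition. Definiteness makes `κ` non-degenerate, so `ξ ∈ Ker A` exactly when `[a,ξ] = 0`; and by
skew-symmetry of the bracket `A^a(ξ,ξ) = κ([a,[a,ξ]], ξ) = -κ([a,ξ],[a,ξ])`, which is positive as
soon as `[a,ξ] ≠ 0`. -/

/-- Let `g` be a finite-dimensional real Lie algebra with negative definite Killing form
`κ`, let `a ∈ g`, and set `A(ξ,η) := κ(a,[ξ,η])`.  Then `A` is a 2-cocycle, its kernel is
the centralizer of `a`, the element `a` is central in `Ker A`, and `A^a` is positive on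
elements outside `Ker A`; in particular the linear pencil `(g, A)` is compact, with
witness `ν = a`. -/
theorem compact_pencil_of_negDef_killingForm
    {g : Type*} [LieRing g] [LieAlgebra ℝ g] [Module.Finite ℝ g]
    (hNeg : ∀ x : g, x ≠ 0 → killingForm ℝ g x x < 0)
    (a : g) (A : g → g → ℝ) (hA : ∀ ξ η : g, A ξ η = killingForm ℝ g a ⁅ξ, η⁆) :
    -- (1) `A` is a 2-cocycle
    (∀ ξ η ζ : g, A ⁅ξ, η⁆ ζ + A ⁅η, ζ⁆ ξ + A ⁅ζ, ξ⁆ η = 0) ∧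
    -- (2) `Ker A` is the centralizer of `a`
    (∀ ξ : g, (∀ η : g, A ξ η = 0) ↔ ⁅a, ξ⁆ = 0) ∧
    -- (3) `a` lies in the center of `Ker A`
    ((∀ η : g, A a η = 0) ∧ ∀ ξ : g, (∀ η : g, A ξ η = 0) → ⁅a, ξ⁆ = 0) ∧
    -- (4) `A^a` is positive definite outside `Ker A`
    (∀ ξ : g, ¬ (∀ η : g, A ξ η = 0) →
      A ⁅a, ξ⁆ ξ = - killingForm ℝ g ⁅a, ξ⁆ ⁅a, ξ⁆ ∧ 0 < A ⁅a, ξ⁆ ξ) := by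
  have hA' : ∀ ξ η : g, A ξ η = killingForm ℝ g ⁅a, ξ⁆ η := fun ξ η => by
    rw [hA]
    exact (LieModule.traceForm_apply_lie_apply ℝ g g a ξ η).symm
  have hker : ∀ ξ : g, (∀ η : g, A ξ η = 0) ↔ ⁅a, ξ⁆ = 0 := fun ξ => by
    refine ⟨fun h => ?_, fun h η => by simp [hA', h]⟩
    by_contra hne
    exact (hNeg _ hne).ne (by rw [← hA', h])
  refine ⟨fun ξ η ζ => ?_, hker, ⟨(hker a).2 (lie_self a), fun ξ => (hker ξ).1⟩, fun ξ hξ => ?_⟩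
  · have jacobi : ⁅⁅ξ, η⁆, ζ⁆ + ⁅⁅η, ζ⁆, ξ⁆ + ⁅⁅ζ, ξ⁆, η⁆ = 0 := by
      rw [← lie_skew ⁅ξ, η⁆ ζ, ← lie_skew ⁅η, ζ⁆ ξ, ← lie_skew ⁅ζ, ξ⁆ η, ← neg_add, ← neg_add,
        neg_eq_zero, add_assoc, add_comm, lie_jacobi]
    rw [hA, hA, hA, ← map_add, ← map_add, jacobi, map_zero]
  · have h : A ⁅a, ξ⁆ ξ = - killingForm ℝ g ⁅a, ξ⁆ ⁅a, ξ⁆ := by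
      rw [← hA', hA, hA, ← lie_skew, map_neg]
    exact ⟨h, h ▸ neg_pos.2 (hNeg _ fun h0 => hξ ((hker ξ).2 h0))⟩
end

section
/- Let g = sl(2,ℝ) (real 2×2 traceless matrices with the commutator bracket), let κ be its Killing form, let a ∈ g with a ≠ 0, and define the 2-cocycle A(ξ,η) := κ(a,[ξ,η]). Then the linear pencil (g, A) is compact — that is, there exists ν ∈ g with ν ∈ Ker A, [ν,ξ] = 0 for all ξ ∈ Ker A, and A^ν(ξ,ξ) > 0 for all ξ ∉ Ker A — if and only if κ(a,a) < 0. Moreover, when κ(a,a) < 0, ν = −a is such a witness. -/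
/-!
By invariance of the Killing form `κ`, `A(ξ, η) = κ([a, ξ], η)`. As `κ` is nondegenerate, `Ker A` is
the centralizer of `a`, and `A([-a, ξ], ξ) = κ([a, ξ], [a, ξ])`.

If `κ(a, a) < 0`, then `κ` is positive definite on the orthogonal complement of `a`, since it has
signature `(2, 1)` (`killingForm_self_pos`). This complement contains `[a, ξ]`, so `-a` is a
witness of compactness.

If `κ(a, a) ≥ 0`, then `a` has a real eigenvector and therefore lies in a Borel subalgebra: there is
`ξ` with `[a, ξ] = λ ξ + μ a ≠ 0` (`exists_lie_eq`). For every `ν` commuting with `a`, invariance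
gives `A([ν, ξ], ξ) = -κ([ν, ξ], [a, ξ]) = -λ κ(ν, [ξ, ξ]) - μ κ([a, ν], ξ) = 0`, although
`ξ ∉ Ker A`. So no witness exists.

The facts specific to `sl(2, ℝ)` are checked in the coordinates `!![p, q; r, -p]`, where
`κ(x, y) = 8 p p' + 4 (q r' + r q')` (`killingForm_eq`).
-/

namespace SlTwoPencil

open LieAlgebra.SpecialLinear

/-- The element `!![p, q; r, -p]` of `sl(2, ℝ)`. -/
def mk (p q r : ℝ) : sl (Fin 2) ℝ :=
  ⟨!![p, q; r, -p], by
    change Matrix.trace (!![p, q; r, -p] : Matrix (Fin 2) (Fin 2) ℝ) = 0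
    simp [Matrix.trace_fin_two]⟩

lemma exists_eq_mk (x : sl (Fin 2) ℝ) : ∃ p q r, x = mk p q r := by
  refine ⟨x.1 0 0, x.1 0 1, x.1 1 0, Subtype.ext ?_⟩
  have h : Matrix.trace x.1 = 0 := x.2
  rw [Matrix.trace_fin_two] at h
  ext i j
  fin_cases i <;> fin_cases j <;> simp [mk]
  linarith

lemma mk_inj {p q r p' q' r' : ℝ} : mk p q r = mk p' q' r' ↔ p = p' ∧ q = q' ∧ r = r' := by
  constructor
  · intro h
    have h' := congrArg Subtype.val h
    exact ⟨congrFun (congrFun h' 0) 0, congrFun (congrFun h' 0) 1, congrFun (congrFun h' 1) 0⟩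
  · rintro ⟨rfl, rfl, rfl⟩
    rfl

lemma mk_add (p q r p' q' r' : ℝ) : mk p q r + mk p' q' r' = mk (p + p') (q + q') (r + r') := by
  apply Subtype.ext
  ext i j
  fin_cases i <;> fin_cases j <;> simp [mk]
  ring

lemma mk_smul (c p q r : ℝ) : c • mk p q r = mk (c * p) (c * q) (c * r) := by
  apply Subtype.ext
  ext i j
  fin_cases i <;> fin_cases j <;> simp [mk]

lemma mk_zero : mk 0 0 0 = 0 := by
  apply Subtype.ext
  ext i j
  fin_cases i <;> fin_cases j <;> simp [mk]

lemma mk_eq_zero {p q r : ℝ} : mk p q r = 0 ↔ p = 0 ∧ q = 0 ∧ r = 0 := by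
  rw [← mk_zero, mk_inj]

lemma lie_mk (p q r p' q' r' : ℝ) :
    ⁅mk p q r, mk p' q' r'⁆ =
      mk (q * r' - r * q') (2 * (p * q' - q * p')) (2 * (r * p' - p * r')) := by
  apply Subtype.ext
  rw [sl_bracket]
  ext i j
  fin_cases i <;> fin_cases j <;> simp [mk] <;> ring

/-- The coordinates `(p, q, r)` of `!![p, q; r, -p]`, as a linear equivalence. -/
def coords : sl (Fin 2) ℝ ≃ₗ[ℝ] (Fin 3 → ℝ) where
  toFun x := ![x.1 0 0, x.1 0 1, x.1 1 0]
  invFun v := mk (v 0) (v 1) (v 2)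
  map_add' x y := by
    ext i
    fin_cases i <;> simp
  map_smul' c x := by
    ext i
    fin_cases i <;> simp
  left_inv x := by
    obtain ⟨p, q, r, rfl⟩ := exists_eq_mk x
    simp [mk]
  right_inv v := by
    ext i
    fin_cases i <;> simp [mk]

lemma coords_mk (p q r : ℝ) : coords (mk p q r) = ![p, q, r] := by
  simp [coords, mk]

lemma coords_symm (v : Fin 3 → ℝ) : coords.symm v = mk (v 0) (v 1) (v 2) := rfl

lemma killingForm_eq (p q r p' q' r' : ℝ) :
    killingForm ℝ (sl (Fin 2) ℝ) (mk p q r) (mk p' q' r') =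
      8 * p * p' + 4 * (q * r' + r * q') := by
  rw [killingForm_apply_apply,
    LinearMap.trace_eq_matrix_trace ℝ (Module.Basis.ofEquivFun coords), Matrix.trace_fin_three]
  simp only [LinearMap.toMatrix_apply, Module.Basis.coe_ofEquivFun,
    Module.Basis.ofEquivFun_repr_apply,
    LinearMap.comp_apply, LieAlgebra.ad_apply, coords_symm, lie_mk, coords_mk]
  simp
  ring

lemma killingForm_lie (x y z : sl (Fin 2) ℝ) :
    killingForm ℝ (sl (Fin 2) ℝ) x ⁅y, z⁆ = killingForm ℝ (sl (Fin 2) ℝ) ⁅x, y⁆ z :=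
  (LieModule.traceForm_apply_lie_apply ℝ (sl (Fin 2) ℝ) (sl (Fin 2) ℝ) x y z).symm

lemma killingForm_nondegenerate {x : sl (Fin 2) ℝ}
    (h : ∀ y, killingForm ℝ (sl (Fin 2) ℝ) x y = 0) : x = 0 := by
  obtain ⟨p, q, r, rfl⟩ := exists_eq_mk x
  have h₁ := h (mk 1 0 0)
  have h₂ := h (mk 0 1 0)
  have h₃ := h (mk 0 0 1)
  rw [killingForm_eq] at h₁ h₂ h₃
  rw [mk_eq_zero]
  refine ⟨?_, ?_, ?_⟩ <;> linarith

/-- `κ` is positive definite on the orthogonal complement of a vector `a` with `κ(a, a) < 0`. -/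
lemma killingForm_self_pos {a w : sl (Fin 2) ℝ} (ha : killingForm ℝ (sl (Fin 2) ℝ) a a < 0)
    (haw : killingForm ℝ (sl (Fin 2) ℝ) a w = 0) (hw : w ≠ 0) :
    0 < killingForm ℝ (sl (Fin 2) ℝ) w w := by
  obtain ⟨p, q, r, rfl⟩ := exists_eq_mk a
  obtain ⟨x, y, z, rfl⟩ := exists_eq_mk w
  rw [killingForm_eq] at ha haw ⊢
  have hD : p ^ 2 + q * r < 0 := by nlinarith
  have hqr : q * r < 0 := by nlinarith [sq_nonneg p]
  -- Orthogonality reads `q z + r y = -2 p x`, and `-4 q r y z = (q z - r y)² - (q z + r y)²`.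
  have key : -4 * (q * r) * (x ^ 2 + y * z) =
      -4 * (p ^ 2 + q * r) * x ^ 2 + (q * z - r * y) ^ 2 := by
    linear_combination (-(1 / 16 : ℝ)) * haw * (4 * (q * z + r * y) - 8 * p * x)
  have hpos : 0 < -4 * (p ^ 2 + q * r) * x ^ 2 + (q * z - r * y) ^ 2 := by
    by_cases hx : x = 0
    · subst hx
      have h : q * z - r * y ≠ 0 := by
        intro h
        have hqz : q * z = 0 := by linarith
        have hry : r * y = 0 := by linarith
        have hq : q ≠ 0 := by rintro rfl; simp at hqr
        have hr : r ≠ 0 := by rintro rfl; simp at hqr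
        exact hw (mk_eq_zero.2 ⟨rfl, by simpa [hr] using hry, by simpa [hq] using hqz⟩)
      have := pow_pos (abs_pos.2 h) 2
      rw [sq_abs] at this
      linarith
    · have := mul_pos (show 0 < -4 * (p ^ 2 + q * r) by linarith) (pow_pos (abs_pos.2 hx) 2)
      rw [sq_abs] at this
      nlinarith [sq_nonneg (q * z - r * y)]
  have : 0 < x ^ 2 + y * z := by
    by_contra hn
    nlinarith
  linarith

/-- A nonzero `a` with `κ(a, a) ≥ 0` lies in a Borel subalgebra, spanned by `a` and some `ξ` that
does not commute with `a`. -/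
lemma exists_lie_eq {a : sl (Fin 2) ℝ} (ha : a ≠ 0)
    (haa : 0 ≤ killingForm ℝ (sl (Fin 2) ℝ) a a) :
    ∃ (ξ : sl (Fin 2) ℝ) (l m : ℝ), ⁅a, ξ⁆ = l • ξ + m • a ∧ ⁅a, ξ⁆ ≠ 0 := by
  obtain ⟨p, q, r, rfl⟩ := exists_eq_mk a
  rw [killingForm_eq] at haa
  rw [Ne, mk_eq_zero] at ha
  by_cases hq : q = 0
  · subst hq
    by_cases hp : p = 0
    · subst hp
      refine ⟨mk 1 0 0, 0, 2, ?_, ?_⟩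
      · rw [lie_mk, mk_smul, mk_smul, mk_add, mk_inj]
        simp
      · rw [lie_mk, Ne, mk_eq_zero]
        simpa using ha
    · refine ⟨mk 0 0 1, -2 * p, 0, ?_, ?_⟩
      · rw [lie_mk, mk_smul, mk_smul, mk_add, mk_inj]
        simp
      · rw [lie_mk, Ne, mk_eq_zero]
        simp [hp]
  · obtain ⟨d, hd⟩ : ∃ d : ℝ, d ^ 2 = p ^ 2 + q * r :=
      ⟨√(p ^ 2 + q * r), Real.sq_sqrt (by linarith)⟩
    by_cases hd0 : d = 0
    · subst hd0
      refine ⟨mk q 0 (-2 * p), 0, -2 * q, ?_, ?_⟩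
      · rw [lie_mk, mk_smul, mk_smul, mk_add, mk_inj]
        refine ⟨by ring, by ring, ?_⟩
        linear_combination (-4 : ℝ) * hd
      · rw [lie_mk, Ne, mk_eq_zero]
        simp [hq]
    · -- `v = (q, d - p)` is an eigenvector of `a` with eigenvalue `d`; the matrix chosen here is
      -- `u ↦ ω(v, u) v`, up to sign, for the standard area form `ω`.
      refine ⟨mk (q * (d - p)) (-q ^ 2) ((d - p) ^ 2), 2 * d, 0, ?_, ?_⟩
      · rw [lie_mk, mk_smul, mk_smul, mk_add, mk_inj]
        refine ⟨?_, by ring, ?_⟩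
        · linear_combination (-q) * hd
        · linear_combination (-2 * (d - p)) * hd
      · rw [lie_mk, Ne, mk_eq_zero]
        rintro ⟨-, h, -⟩
        have : d * q ^ 2 = 0 := by linear_combination (-1 / 2 : ℝ) * h
        simp [hd0, hq] at this

end SlTwoPencil


open LieAlgebra.SpecialLinear in
/-- For `g = sl(2,ℝ)` with Killing form `κ`, `a ≠ 0` and the 2-cocycle
`A(ξ,η) = κ(a,[ξ,η])`, the linear pencil `(g,A)` is compact iff `κ(a,a) < 0`;
moreover when `κ(a,a) < 0` the element `ν = -a` is a witness of compactness. -/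
theorem sl2_pencil_compact_iff_killing_neg
    (a : sl (Fin 2) ℝ) (ha : a ≠ 0)
    (A : sl (Fin 2) ℝ → sl (Fin 2) ℝ → ℝ)
    (hA : ∀ ξ η, A ξ η = killingForm ℝ (sl (Fin 2) ℝ) a ⁅ξ, η⁆) :
    ((∃ ν : sl (Fin 2) ℝ,
        (∀ η, A ν η = 0) ∧
        (∀ ξ, (∀ η, A ξ η = 0) → ⁅ν, ξ⁆ = 0) ∧
        (∀ ξ, ¬ (∀ η, A ξ η = 0) → 0 < A ⁅ν, ξ⁆ ξ))
      ↔ killingForm ℝ (sl (Fin 2) ℝ) a a < 0) ∧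
    (killingForm ℝ (sl (Fin 2) ℝ) a a < 0 →
      ((∀ η, A (-a) η = 0) ∧
       (∀ ξ, (∀ η, A ξ η = 0) → ⁅(-a), ξ⁆ = 0) ∧
       (∀ ξ, ¬ (∀ η, A ξ η = 0) → 0 < A ⁅(-a), ξ⁆ ξ))) := by
  have hA' : ∀ ξ η, A ξ η = killingForm ℝ (sl (Fin 2) ℝ) ⁅a, ξ⁆ η := fun ξ η => by
    rw [hA, SlTwoPencil.killingForm_lie]
  have hker : ∀ ξ, (∀ η, A ξ η = 0) ↔ ⁅a, ξ⁆ = 0 := fun ξ => by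
    refine ⟨fun h => SlTwoPencil.killingForm_nondegenerate fun η => by rw [← hA', h], fun h η => ?_⟩
    rw [hA', h, map_zero, LinearMap.zero_apply]
  have hAν : ∀ ν ξ : sl (Fin 2) ℝ, A ⁅ν, ξ⁆ ξ = -killingForm ℝ (sl (Fin 2) ℝ) ⁅ν, ξ⁆ ⁅a, ξ⁆ := fun _ _ => by
    rw [hA, SlTwoPencil.killingForm_lie, ← lie_skew, map_neg, LinearMap.neg_apply,
      ← SlTwoPencil.killingForm_lie]
  have hwit : killingForm ℝ (sl (Fin 2) ℝ) a a < 0 →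
      ((∀ η, A (-a) η = 0) ∧
       (∀ ξ, (∀ η, A ξ η = 0) → ⁅(-a), ξ⁆ = 0) ∧
       (∀ ξ, ¬ (∀ η, A ξ η = 0) → 0 < A ⁅(-a), ξ⁆ ξ)) := by
    intro haa
    refine ⟨(hker _).2 (by simp), fun ξ h => ?_, fun ξ h => ?_⟩
    · rw [neg_lie, (hker ξ).1 h, neg_zero]
    · rw [hker] at h
      rw [hAν, neg_lie, map_neg, LinearMap.neg_apply, neg_neg]
      refine SlTwoPencil.killingForm_self_pos haa ?_ h
      rw [SlTwoPencil.killingForm_lie, lie_self, map_zero, LinearMap.zero_apply]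
  refine ⟨⟨?_, fun haa => ⟨-a, hwit haa⟩⟩, hwit⟩
  rintro ⟨ν, hν, -, hpos⟩
  by_contra! haa
  obtain ⟨ξ, l, m, hξ, hne⟩ := SlTwoPencil.exists_lie_eq ha haa
  have h := hpos ξ (by rwa [hker])
  have hνa : ⁅a, ν⁆ = 0 := (hker ν).1 hν
  have h₁ : killingForm ℝ (sl (Fin 2) ℝ) ⁅ν, ξ⁆ ξ = 0 := by
    rw [← SlTwoPencil.killingForm_lie, lie_self, map_zero]
  have h₂ : killingForm ℝ (sl (Fin 2) ℝ) ⁅ν, ξ⁆ a = 0 := by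
    rw [LieModule.traceForm_comm, SlTwoPencil.killingForm_lie, hνa, map_zero, LinearMap.zero_apply]
  rw [hAν, hξ, map_add, map_smul, map_smul, h₁, h₂] at h
  simp at h
end

section
/- Let φ, ψ, χ : ℝ → ℝ be smooth 2π-periodic functions, let [φ,ψ] := φψ′ − ψφ′, and let A(φ,ψ) := ∫₀^{2π} φ(x) ψ‴(x) dx (the Gelfand–Fuks cocycle). Then A is skew-symmetric, A(φ,ψ) = −A(ψ,φ), and satisfies the 2-cocycle identity A([φ,ψ],χ) + A([ψ,χ],φ) + A([χ,φ],ψ) = 0. -/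
/-!
Both claims hold because the relevant integrand is the derivative of a `2π`-periodic function,
so that its integral over a period vanishes (`integral_eq_zero_of_periodic_primitive`):

* `φ ψ‴ + ψ φ‴ = (φ ψ″ − φ′ ψ′ + ψ φ″)′`, which gives skew-symmetry;
* the cyclic sum `(φψ′ − ψφ′) χ‴ + (ψχ′ − χψ′) φ‴ + (χφ′ − φχ′) ψ‴` is the derivative of the
  Wronskian determinant of `φ, ψ, χ`, since differentiating the row of values or of first
  derivatives produces two equal rows. This gives the cocycle identity.
-/

open Real intervalIntegral

/-- The Gelfand–Fuks cocycle `A(φ,ψ) = ∫₀^{2π} φ ψ‴ dx` on vector fields on the circle. -/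
noncomputable def gelfandFuks (φ ψ : ℝ → ℝ) : ℝ :=
  ∫ x in (0:ℝ)..(2 * Real.pi), φ x * iteratedDeriv 3 ψ x

/-- The bracket `[φ,ψ] = φψ′ − ψφ′` of vector fields on the circle. -/
noncomputable def vfBracket (φ ψ : ℝ → ℝ) : ℝ → ℝ :=
  fun x => φ x * deriv ψ x - ψ x * deriv φ x

/-- A continuous function with a `T`-periodic primitive has integral zero over a period. -/
lemma integral_eq_zero_of_periodic_primitive {F f : ℝ → ℝ} {T : ℝ}
    (hF : ∀ x, HasDerivAt F (f x) x) (hf : Continuous f) (hp : Function.Periodic F T) :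
    ∫ x in (0:ℝ)..T, f x = 0 := by
  rw [integral_eq_sub_of_hasDerivAt (fun x _ => hF x) (hf.intervalIntegrable _ _),
    hp.eq, sub_self]

lemma ContDiff.hasDerivAt_iteratedDeriv {f : ℝ → ℝ} (hf : ContDiff ℝ (⊤ : ℕ∞) f) (n : ℕ) (x : ℝ) :
    HasDerivAt (iteratedDeriv n f) (iteratedDeriv (n + 1) f x) x := by
  rw [iteratedDeriv_succ]
  exact (hf.differentiable_iteratedDeriv n (by exact_mod_cast WithTop.coe_lt_top n) x).hasDerivAt

lemma Function.Periodic.iteratedDeriv {f : ℝ → ℝ} {T : ℝ} (hf : Function.Periodic f T) (n : ℕ) :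
    Function.Periodic (iteratedDeriv n f) T := by
  intro x
  have h := congrFun (iteratedDeriv_comp_add_const n f T) x
  rwa [show (fun z => f (z + T)) = f from funext hf, eq_comm] at h

/-- For smooth `2π`-periodic functions (vector fields on the circle), the Gelfand–Fuks
form `A(φ,ψ) = ∫₀^{2π} φ ψ‴ dx` is skew-symmetric and satisfies the 2-cocycle identity
with respect to the bracket `[φ,ψ] = φψ′ − ψφ′`. -/
theorem gelfandFuks_skew_and_cocycle
    (φ ψ χ : ℝ → ℝ)
    (hφ : ContDiff ℝ (⊤ : ℕ∞) φ) (hψ : ContDiff ℝ (⊤ : ℕ∞) ψ) (hχ : ContDiff ℝ (⊤ : ℕ∞) χ)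
    (hφp : Function.Periodic φ (2 * Real.pi))
    (hψp : Function.Periodic ψ (2 * Real.pi))
    (hχp : Function.Periodic χ (2 * Real.pi)) :
    gelfandFuks φ ψ = - gelfandFuks ψ φ ∧
    gelfandFuks (vfBracket φ ψ) χ + gelfandFuks (vfBracket ψ χ) φ
      + gelfandFuks (vfBracket χ φ) ψ = 0 := by
  have hcont {f : ℝ → ℝ} (hf : ContDiff ℝ (⊤ : ℕ∞) f) (n : ℕ) : Continuous (iteratedDeriv n f) :=
    continuous_iff_continuousAt.2 fun x => (hf.hasDerivAt_iteratedDeriv n x).continuousAt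
  have hint {f g : ℝ → ℝ} (hf : Continuous f) (hg : ContDiff ℝ (⊤ : ℕ∞) g) :
      IntervalIntegrable (fun x => f x * iteratedDeriv 3 g x) MeasureTheory.volume 0
        (2 * Real.pi) :=
    (hf.mul (hcont hg 3)).intervalIntegrable _ _
  have hbr {f g : ℝ → ℝ} (hf : ContDiff ℝ (⊤ : ℕ∞) f) (hg : ContDiff ℝ (⊤ : ℕ∞) g) :
      Continuous (vfBracket f g) := by
    have hf1 := hcont hf 1
    have hg1 := hcont hg 1
    rw [iteratedDeriv_one] at hf1 hg1
    exact (hf.continuous.mul hg1).sub (hg.continuous.mul hf1)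
  have dφ := hφ.hasDerivAt_iteratedDeriv
  have dψ := hψ.hasDerivAt_iteratedDeriv
  have dχ := hχ.hasDerivAt_iteratedDeriv
  have pφ := hφp.iteratedDeriv
  have pψ := hψp.iteratedDeriv
  have pχ := hχp.iteratedDeriv
  constructor
  · rw [eq_neg_iff_add_eq_zero]
    unfold gelfandFuks
    rw [← integral_add (hint hφ.continuous hψ) (hint hψ.continuous hφ)]
    refine integral_eq_zero_of_periodic_primitive
      (F := fun x => iteratedDeriv 0 φ x * iteratedDeriv 2 ψ x
        - iteratedDeriv 1 φ x * iteratedDeriv 1 ψ x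
        + iteratedDeriv 0 ψ x * iteratedDeriv 2 φ x) (fun x => ?_) ?_ (fun x => ?_)
    · refine ((((dφ 0 x).mul (dψ 2 x)).sub ((dφ 1 x).mul (dψ 1 x))).add
        ((dψ 0 x).mul (dφ 2 x))).congr_deriv ?_
      simp only [iteratedDeriv_zero]
      ring
    · exact (hφ.continuous.mul (hcont hψ 3)).add (hψ.continuous.mul (hcont hφ 3))
    · simp only [pφ _ x, pψ _ x]
  · unfold gelfandFuks
    rw [← integral_add (hint (hbr hφ hψ) hχ) (hint (hbr hψ hχ) hφ),
      ← integral_add ((hint (hbr hφ hψ) hχ).add (hint (hbr hψ hχ) hφ)) (hint (hbr hχ hφ) hψ)]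
    -- The primitive is the Wronskian, expanded along the row of second derivatives.
    refine integral_eq_zero_of_periodic_primitive
      (F := fun x =>
        (iteratedDeriv 0 φ x * iteratedDeriv 1 ψ x - iteratedDeriv 0 ψ x * iteratedDeriv 1 φ x)
          * iteratedDeriv 2 χ x
        + (iteratedDeriv 0 ψ x * iteratedDeriv 1 χ x - iteratedDeriv 0 χ x * iteratedDeriv 1 ψ x)
          * iteratedDeriv 2 φ x
        + (iteratedDeriv 0 χ x * iteratedDeriv 1 φ x - iteratedDeriv 0 φ x * iteratedDeriv 1 χ x)
          * iteratedDeriv 2 ψ x) (fun x => ?_) ?_ (fun x => ?_)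
    · refine ((((((dφ 0 x).mul (dψ 1 x)).sub ((dψ 0 x).mul (dφ 1 x))).mul (dχ 2 x)).add
        ((((dψ 0 x).mul (dχ 1 x)).sub ((dχ 0 x).mul (dψ 1 x))).mul (dφ 2 x))).add
        ((((dχ 0 x).mul (dφ 1 x)).sub ((dφ 0 x).mul (dχ 1 x))).mul (dψ 2 x))).congr_deriv ?_
      simp only [vfBracket, ← iteratedDeriv_one, iteratedDeriv_zero, Pi.sub_apply, Pi.mul_apply]
      ring
    · exact (((hbr hφ hψ).mul (hcont hχ 3)).add ((hbr hψ hχ).mul (hcont hφ 3))).add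
        ((hbr hχ hφ).mul (hcont hψ 3))
    · simp only [pφ _ x, pψ _ x, pχ _ x]
end

section
/- Let V be a finite-dimensional real vector space, let P₀ and P_∞ be alternating bilinear forms on V with P_∞ nondegenerate, and let R : V → V be the recursion operator, i.e. the unique linear map with P_∞(Rξ,η) = P₀(ξ,η) for all ξ,η ∈ V. Assume that every eigenvalue of R (over ℂ) is real, and that for each real eigenvalue λ of R the restriction of P_∞ to the eigenspace ker(R − λ·id) is nondegenerate. Then R is diagonalizable: V is the direct sum of the eigenspaces of R. -/
/-!
Since `P₀` and `P_∞` are both skew-symmetric, `R` is self-adjoint for `P_∞`, and so is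
`N = R - λ` for every real `λ`. Hence `ker N` is `P_∞`-orthogonal to `range N`, and
nondegeneracy of `P_∞` on `ker N` gives `ker N ∩ range N = 0`: `R` has no Jordan block of size
at least two for the eigenvalue `λ` (`disjoint_eigenspace_range`).

As all complex roots of the characteristic polynomial are real, it is a product of real linear
factors, and by Cayley–Hamilton the corresponding product of operators `R - λ` vanishes. Let `W`
be the sum of the eigenspaces. Absence of Jordan blocks means that `(R - λ) v ∈ W` implies
`v ∈ W` (`mem_iSup_eigenspace_of_sub_smul_mem`), so the linear factors can be removed one at a
time, and `0 ∈ W` gives `v ∈ W` for every `v`.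
-/

/-- For `μ ≠ lam` the operator `R - lam` acts on `eigenspace R μ` as the nonzero scalar `μ - lam`,
so `W = ⨆ μ, eigenspace R μ` satisfies `W ≤ eigenspace R lam ⊔ (R - lam) W`. When
`(R - lam) v ∈ W`, its component in `eigenspace R lam` lies in the range of `R - lam` and
therefore vanishes, so `v` differs from an element of `W` by an element of `eigenspace R lam`. -/
theorem mem_iSup_eigenspace_of_sub_smul_mem
    {K V : Type*} [Field K] [AddCommGroup V] [Module K V] (R : Module.End K V) (lam : K)
    (hdisj : ∀ ζ : V, R ζ - lam • ζ ∈ Module.End.eigenspace R lam → R ζ - lam • ζ = 0)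
    (v : V) (hv : R v - lam • v ∈ ⨆ μ : K, Module.End.eigenspace R μ) :
    v ∈ ⨆ μ : K, Module.End.eigenspace R μ := by
  set W := ⨆ μ : K, Module.End.eigenspace R μ with hW
  have hle : ∀ μ : K, Module.End.eigenspace R μ ≤ W := le_iSup (Module.End.eigenspace R)
  have hWle : W ≤ Module.End.eigenspace R lam ⊔ W.map (R - lam • (1 : Module.End K V)) := by
    refine iSup_le fun μ x hx ↦ ?_
    by_cases h : μ = lam
    · exact Submodule.mem_sup_left (h ▸ hx)
    · refine Submodule.mem_sup_right ⟨(μ - lam)⁻¹ • x, W.smul_mem _ (hle μ hx), ?_⟩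
      have hx' := Module.End.mem_eigenspace_iff.mp hx
      have h' : μ - lam ≠ 0 := sub_ne_zero.mpr h
      rw [map_smul, LinearMap.sub_apply, LinearMap.smul_apply, Module.End.one_apply, hx',
        ← sub_smul, smul_smul, inv_mul_cancel₀ h', one_smul]
  obtain ⟨e, he, y, ⟨w, hw, rfl⟩, hew⟩ := Submodule.mem_sup.mp (hWle hv)
  simp only [LinearMap.sub_apply, LinearMap.smul_apply, Module.End.one_apply] at hew
  have hsub : R (v - w) - lam • (v - w) = e := by
    rw [map_sub, smul_sub, sub_sub_sub_comm, ← hew, add_sub_cancel_right]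
  have h0 := hdisj (v - w) (hsub ▸ he)
  have hvw : v - w ∈ W := hle lam (Module.End.mem_eigenspace_iff.mpr (sub_eq_zero.mp h0))
  simpa using W.add_mem hvw hw

open Polynomial in
theorem iSup_eigenspace_eq_top_of_splits
    {K V : Type*} [Field K] [AddCommGroup V] [Module K V] [FiniteDimensional K V]
    (R : Module.End K V) (hsplit : R.charpoly.Splits)
    (hdisj : ∀ (lam : K) (ζ : V),
      R ζ - lam • ζ ∈ Module.End.eigenspace R lam → R ζ - lam • ζ = 0) :
    ⨆ lam : K, Module.End.eigenspace R lam = ⊤ := by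
  have key : ∀ (s : Multiset K) (v : V),
      aeval R (s.map fun a ↦ X - C a).prod v ∈ ⨆ μ : K, Module.End.eigenspace R μ →
        v ∈ ⨆ μ : K, Module.End.eigenspace R μ := by
    intro s
    induction s using Multiset.induction with
    | empty => intro v hv; simpa using hv
    | cons a s ih =>
      intro v hv
      refine ih v (mem_iSup_eigenspace_of_sub_smul_mem R a (hdisj a) _ ?_)
      simpa [Module.algebraMap_end_apply] using hv
  refine eq_top_iff.mpr fun v _ ↦ key R.charpoly.roots v ?_
  rw [← hsplit.eq_prod_roots_of_monic R.charpoly_monic, LinearMap.aeval_self_charpoly]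
  exact Submodule.zero_mem _

/-- The eigenspace for `lam` meets the range of `R - lam` trivially: these two subspaces are
orthogonal for any form `B` making `R` self-adjoint, and `B` is nondegenerate on the former. -/
theorem disjoint_eigenspace_range
    {K V : Type*} [Field K] [AddCommGroup V] [Module K V]
    (B : V →ₗ[K] V →ₗ[K] K) (R : Module.End K V) (hself : ∀ ξ η : V, B (R ξ) η = B ξ (R η))
    (lam : K)
    (hnd : ∀ ξ ∈ Module.End.eigenspace R lam,
      (∀ η ∈ Module.End.eigenspace R lam, B ξ η = 0) → ξ = 0)
    (ζ : V) (hζ : R ζ - lam • ζ ∈ Module.End.eigenspace R lam) : R ζ - lam • ζ = 0 := by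
  refine hnd _ hζ fun η hη ↦ ?_
  simp [hself, Module.End.mem_eigenspace_iff.mp hη]

open Polynomial in
theorem splits_of_complex_roots_real (p : ℝ[X]) (h : ∀ z : ℂ, aeval z p = 0 → z.im = 0) :
    p.Splits := by
  refine Splits.of_splits_map (algebraMap ℝ ℂ) (IsAlgClosed.splits _) fun z hz ↦ ?_
  have hz' : aeval z p = 0 := by
    simpa [IsRoot, eval_map_algebraMap] using isRoot_of_mem_roots hz
  exact ⟨z.re, Complex.ext (by simp) (by simp [h z hz'])⟩


/-- Let `P₀, P_∞` be alternating bilinear forms on a finite-dimensional real vector space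
with `P_∞` nondegenerate, and let `R` be the recursion operator, `P_∞(Rξ,η) = P₀(ξ,η)`.
If every complex eigenvalue of `R` (i.e. every complex root of its characteristic
polynomial) is real, and the restriction of `P_∞` to every real eigenspace of `R` is
nondegenerate, then `R` is diagonalizable: `V` is the sum of the eigenspaces of `R`. -/
theorem recursion_operator_diagonalizable
    {V : Type*} [AddCommGroup V] [Module ℝ V] [FiniteDimensional ℝ V]
    (P₀ Pinf : V →ₗ[ℝ] V →ₗ[ℝ] ℝ)
    (hAlt₀ : ∀ ξ : V, P₀ ξ ξ = 0) (hAltInf : ∀ ξ : V, Pinf ξ ξ = 0)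
    (hNondeg : ∀ ξ : V, (∀ η : V, Pinf ξ η = 0) → ξ = 0)
    (R : Module.End ℝ V) (hR : ∀ ξ η : V, Pinf (R ξ) η = P₀ ξ η)
    (hRealSpec : ∀ z : ℂ, Polynomial.aeval z (LinearMap.charpoly R) = 0 → z.im = 0)
    (hEigNondeg : ∀ (lam : ℝ), ∀ ξ ∈ Module.End.eigenspace R lam,
      (∀ η ∈ Module.End.eigenspace R lam, Pinf ξ η = 0) → ξ = 0) :
    ⨆ lam : ℝ, Module.End.eigenspace R lam = ⊤ := by
  have hskew : ∀ (B : V →ₗ[ℝ] V →ₗ[ℝ] ℝ), (∀ ξ, B ξ ξ = 0) → ∀ ξ η, B ξ η = -B η ξ := by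
    intro B hB ξ η
    have h := hB (ξ + η)
    simp only [map_add, LinearMap.add_apply, hB] at h
    linarith
  have hself : ∀ ξ η : V, Pinf (R ξ) η = Pinf ξ (R η) := fun ξ η ↦ by
    rw [hR, hskew P₀ hAlt₀, hskew Pinf hAltInf ξ, hR]
  exact iSup_eigenspace_eq_top_of_splits R (splits_of_complex_roots_real _ hRealSpec)
    fun lam ↦ disjoint_eigenspace_range Pinf R hself lam (hEigNondeg lam)
end

section
/- (Manakov) Let J be an n×n real matrix and let Ω : ℝ → (n×n real matrices) be differentiable with M(t) := Ω(t)J + JΩ(t) satisfying Ṁ = [M, Ω]. Then for every λ ∈ ℝ the Lax equation with spectral parameter holds: d/dt (M(t) + λJ²) = [M(t) + λJ², Ω(t) + λJ]. -/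
open Matrix

attribute [local instance] Matrix.normedAddCommGroup Matrix.normedSpace

/-- (Manakov)  If the angular momentum `M = ΩJ + JΩ` of a rigid body satisfies the Lax
equation `Ṁ = [M,Ω]`, then for every `λ ∈ ℝ` the Lax equation with spectral parameter
holds: `d/dt (M + λJ²) = [M + λJ², Ω + λJ]`. -/
theorem manakov_lax_with_spectral_parameter
    {n : ℕ} (J : Matrix (Fin n) (Fin n) ℝ)
    (Ω : ℝ → Matrix (Fin n) (Fin n) ℝ)
    (M : ℝ → Matrix (Fin n) (Fin n) ℝ)
    (hM : ∀ t : ℝ, M t = Ω t * J + J * Ω t)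
    (hLax : ∀ t : ℝ, HasDerivAt M (M t * Ω t - Ω t * M t) t) :
    ∀ (lam : ℝ) (t : ℝ),
      HasDerivAt (fun s => M s + lam • (J * J))
        ((M t + lam • (J * J)) * (Ω t + lam • J)
          - (Ω t + lam • J) * (M t + lam • (J * J))) t := by
  intro lam t
  -- The `lam`-linear terms of the commutator are `[M, J] + [J², Ω]`, which vanishes because
  -- `M = ΩJ + JΩ`; the `lam²` term is `[J², J] = 0`.
  have key : (M t + lam • (J * J)) * (Ω t + lam • J) - (Ω t + lam • J) * (M t + lam • (J * J))
      = M t * Ω t - Ω t * M t := by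
    rw [hM t]
    simp only [add_mul, mul_add, smul_mul_assoc, mul_smul_comm, smul_add, mul_assoc]
    abel
  rw [key]
  exact (hLax t).add_const _
end

section
/- Let J be an n×n real matrix and let Ω : ℝ → (n×n real matrices) be differentiable with M(t) := Ω(t)J + JΩ(t) satisfying Ṁ = [M, Ω]. Then for every λ ∈ ℝ and every natural number k, the function t ↦ trace((M(t) + λJ²)^k) is constant in t. In particular the coefficients of the characteristic polynomial of M + λJ² are first integrals of the Euler–Arnold equations. -/
/-!
Put `L = M + λJ²` and `B = Ω + λJ`. Since `M = ΩJ + JΩ`, the terms linear in `λ` in the commutator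
`[L, B]` cancel, `[M, J] + [J², Ω] = 0`, so the Euler–Arnold equation `Ṁ = [M, Ω]` becomes Manakov's
Lax equation with a spectral parameter, `L̇ = [L, B]` (`manakov_commutator`). As `[·, B]` is a
derivation, `(Lᵏ)˙ = [Lᵏ, B]` for every `k` (`hasDerivAt_pow_of_lax`), and a commutator has trace
zero.
-/

open Matrix

attribute [local instance] Matrix.normedAddCommGroup Matrix.normedSpace

/-- A matrix curve is differentiated entry by entry. -/
theorem hasDerivAt_matrix_iff {n : ℕ} {A : ℝ → Matrix (Fin n) (Fin n) ℝ}
    {A' : Matrix (Fin n) (Fin n) ℝ} {t : ℝ} :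
    HasDerivAt A A' t ↔ ∀ i j, HasDerivAt (fun s => A s i j) (A' i j) t :=
  hasDerivAt_pi.trans (forall_congr' fun _ => hasDerivAt_pi)

/-- The product rule. Mathlib's `HasDerivAt.mul` does not apply, because the entrywise sup norm is
not submultiplicative. -/
theorem hasDerivAt_matrix_mul {n : ℕ} {A B : ℝ → Matrix (Fin n) (Fin n) ℝ}
    {A' B' : Matrix (Fin n) (Fin n) ℝ} {t : ℝ} (hA : HasDerivAt A A' t) (hB : HasDerivAt B B' t) :
    HasDerivAt (fun s => A s * B s) (A' * B t + A t * B') t := by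
  rw [hasDerivAt_matrix_iff] at *
  intro i j
  simp only [Matrix.add_apply, Matrix.mul_apply, ← Finset.sum_add_distrib]
  exact HasDerivAt.fun_sum fun l _ => (hA i l).fun_mul (hB l j)

/-- The powers of a solution of a Lax equation solve the same equation, because `[·, B]` is a
derivation. -/
theorem hasDerivAt_pow_of_lax {n : ℕ} {L : ℝ → Matrix (Fin n) (Fin n) ℝ}
    {B : Matrix (Fin n) (Fin n) ℝ} {t : ℝ} (hL : HasDerivAt L (L t * B - B * L t) t) (k : ℕ) :
    HasDerivAt (fun s => L s ^ k) (L t ^ k * B - B * L t ^ k) t := by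
  induction k with
  | zero =>
    simp only [pow_zero, one_mul, mul_one, sub_self]
    exact hasDerivAt_const t (1 : Matrix (Fin n) (Fin n) ℝ)
  | succ k ih =>
    simp only [pow_succ]
    convert hasDerivAt_matrix_mul ih hL using 1
    noncomm_ring

/-- The algebraic identity `[M + λJ², Ω + λJ] = [M, Ω]` for `M = ΩJ + JΩ`, with `W` in the place
of `Ω`. -/
theorem manakov_commutator {n : ℕ} (J W : Matrix (Fin n) (Fin n) ℝ) (lam : ℝ) :
    (W * J + J * W + lam • (J * J)) * (W + lam • J)
      - (W + lam • J) * (W * J + J * W + lam • (J * J))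
      = (W * J + J * W) * W - W * (W * J + J * W) := by
  simp only [mul_add, add_mul, smul_mul_assoc, mul_smul_comm, mul_assoc, smul_add]
  abel

/-- If the angular momentum `M = ΩJ + JΩ` satisfies the Lax equation `Ṁ = [M,Ω]`, then
for every `λ ∈ ℝ` and natural number `k` the function `t ↦ trace((M(t) + λJ²)^k)` is
constant in `t`; in particular the coefficients of the characteristic polynomial of
`M + λJ²` are first integrals of the Euler–Arnold equations. -/
theorem manakov_trace_powers_constant
    {n : ℕ} (J : Matrix (Fin n) (Fin n) ℝ)
    (Ω : ℝ → Matrix (Fin n) (Fin n) ℝ)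
    (M : ℝ → Matrix (Fin n) (Fin n) ℝ)
    (hM : ∀ t : ℝ, M t = Ω t * J + J * Ω t)
    (hLax : ∀ t : ℝ, HasDerivAt M (M t * Ω t - Ω t * M t) t) :
    ∀ (lam : ℝ) (k : ℕ) (t s : ℝ),
      ((M t + lam • (J * J)) ^ k).trace = ((M s + lam • (J * J)) ^ k).trace := by
  intro lam k t s
  have hL (u : ℝ) : HasDerivAt (fun r => M r + lam • (J * J))
      ((M u + lam • (J * J)) * (Ω u + lam • J) - (Ω u + lam • J) * (M u + lam • (J * J))) u := by
    have h := hLax u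
    rw [hM u, ← manakov_commutator J (Ω u) lam, ← hM u] at h
    exact h.add_const _
  have hd (u : ℝ) : HasDerivAt (fun r => ((M r + lam • (J * J)) ^ k).trace) 0 u := by
    have h := hasDerivAt_matrix_iff.1 (hasDerivAt_pow_of_lax (hL u) k)
    have h_tr := HasDerivAt.fun_sum (u := Finset.univ) fun i _ => h i i
    change HasDerivAt _ (Matrix.trace _) u at h_tr
    rwa [Matrix.trace_sub, Matrix.trace_mul_comm, sub_self] at h_tr
  exact is_const_of_deriv_eq_zero (fun u => (hd u).differentiableAt) (fun u => (hd u).deriv) t s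
end

section
/- Let E be a finite-dimensional real normed vector space, let v : E → E be continuous with v(x₀) = 0, and let f : E → ℝ be continuous such that: (1) f is a first integral of v, i.e. for every differentiable curve γ : I → E with γ′(t) = v(γ(t)) for all t in the interval I, the function f ∘ γ is constant on I; and (2) f has a strict local minimum at x₀, i.e. there is r > 0 with f(x) > f(x₀) for all x with 0 < ‖x − x₀‖ ≤ r. Then x₀ is a Lyapunov stable equilibrium of the differential equation ẋ = v(x): for every ε > 0 there exists δ > 0 such that every differentiable curve γ : [0,∞) → E with γ′(t) = v(γ(t)) for all t ≥ 0 and ‖γ(0) − x₀‖ < δ satisfies ‖γ(t) − x₀‖ < ε for all t ≥ 0. -/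
/-!
A solution leaving a small ball around `x₀` must cross the bounding sphere, by the intermediate
value theorem. On that sphere, compact since `E` is finite-dimensional, `f` is bounded below by
some `m > f x₀`, while near `x₀` continuity gives `f < m`. As `f` is constant along the solution,
a solution starting near `x₀` never reaches the sphere.
-/

open Set

/-- Lyapunov stability from a continuous first integral with a strict local minimum:
if `v : E → E` is continuous with `v x₀ = 0` and `f : E → ℝ` is a continuous function
which is constant along every solution curve of `ẋ = v(x)` (on any interval) and has a
strict local minimum at `x₀`, then `x₀` is a Lyapunov stable equilibrium of `ẋ = v(x)`. -/
theorem lyapunov_stable_of_first_integral_strict_local_min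
    {E : Type*} [NormedAddCommGroup E] [NormedSpace ℝ E] [FiniteDimensional ℝ E]
    (v : E → E) (hv : Continuous v) (x₀ : E) (hx₀ : v x₀ = 0)
    (f : E → ℝ) (hf : Continuous f)
    -- (1) `f` is a first integral of `v`
    (hint : ∀ (γ : ℝ → E) (I : Set ℝ), I.OrdConnected →
      (∀ t ∈ I, HasDerivWithinAt γ (v (γ t)) I t) →
      ∀ s ∈ I, ∀ t ∈ I, f (γ s) = f (γ t))
    -- (2) `f` has a strict local minimum at `x₀`
    (r : ℝ) (hr : 0 < r)
    (hmin : ∀ x : E, 0 < ‖x - x₀‖ → ‖x - x₀‖ ≤ r → f x₀ < f x) :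
    -- conclusion: Lyapunov stability
    ∀ ε > 0, ∃ δ > 0, ∀ γ : ℝ → E,
      (∀ t ∈ Ici (0 : ℝ), HasDerivWithinAt γ (v (γ t)) (Ici (0 : ℝ)) t) →
      ‖γ 0 - x₀‖ < δ → ∀ t ≥ (0 : ℝ), ‖γ t - x₀‖ < ε := by
  intro ε hε
  -- A radius at most `r`, so that `hmin` applies on the sphere, and strictly less than `ε`.
  obtain ⟨ρ, hρ, hρr, hρε⟩ : ∃ ρ : ℝ, 0 < ρ ∧ ρ ≤ r ∧ ρ < ε :=
    ⟨min r (ε / 2), lt_min hr (half_pos hε), min_le_left _ _,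
      (min_le_right _ _).trans_lt (half_lt_self hε)⟩
  have : ProperSpace E := FiniteDimensional.proper ℝ E
  obtain ⟨m, hm, hmS⟩ : ∃ m, f x₀ < m ∧ ∀ x ∈ Metric.sphere x₀ ρ, m ≤ f x := by
    refine (isCompact_sphere x₀ ρ).exists_forall_le' hf.continuousOn fun x hx => ?_
    rw [mem_sphere_iff_norm] at hx
    exact hmin x (hx ▸ hρ) (hx ▸ hρr)
  obtain ⟨η, hη, hηf⟩ := Metric.eventually_nhds_iff.1
    (hf.continuousAt.eventually (gt_mem_nhds hm))
  refine ⟨min η ρ, lt_min hη hρ, fun γ hγ h0 t ht => ?_⟩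
  by_contra! hcon
  have hcont : ContinuousOn (fun s => ‖γ s - x₀‖) (Icc 0 t) := fun s hs =>
    (((hγ s hs.1).continuousWithinAt.mono Icc_subset_Ici_self).sub
      continuousWithinAt_const).norm
  obtain ⟨s, hs, hsρ⟩ := intermediate_value_Icc ht hcont
    ⟨(h0.trans_le (min_le_right _ _)).le, hρε.le.trans hcon⟩
  have h1 : f (γ 0) < m := hηf (by
    rw [dist_eq_norm]
    exact h0.trans_le (min_le_left _ _))
  have h2 : m ≤ f (γ s) := hmS _ (mem_sphere_iff_norm.2 hsρ)
  have h3 := hint γ (Ici 0) ordConnected_Ici hγ 0 self_mem_Ici s hs.1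
  linarith
end
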